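/- Suppose γ ≥ h. Then lim_{α↓0} α^h·J(α) = ∫_0^∞ exp{c·μ·s·𝟙{γ = h} − μ·F^{(k)}(0)·s^{k+1}/(k+1)!} ds and lim_{α↓0} α^{2h}·J₁(α) = ∫_0^∞ s·exp{c·μ·s·𝟙{γ = h} − μ·F^{(k)}(0)·s^{k+1}/(k+1)!} ds. -/

import Mathlib

open Filter Set Topology MeasureTheory

open scoped Classical

/-- `J(α) = ∫_0^∞ exp{λ(α) ∫_0^x F̄(α u) du - μ x} dx` for the `M/M/1+GI` queue
with `ρ(α) = 1 + c α^γ`, `λ(α) = ρ(α) μ`, patience CDF `x ↦ F(α x)`. -/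
noncomputable def Jq (F : ℝ → ℝ) (μ c γ α : ℝ) : ℝ :=
  ∫ x in Set.Ioi (0 : ℝ),
    Real.exp ((1 + c * α ^ γ) * μ * (∫ u in (0 : ℝ)..x, (1 - F (α * u))) - μ * x)

/-- `J₁(α) = ∫_0^∞ x exp{λ(α) ∫_0^x F̄(α u) du - μ x} dx`. -/
noncomputable def J1q (F : ℝ → ℝ) (μ c γ α : ℝ) : ℝ :=
  ∫ x in Set.Ioi (0 : ℝ),
    x * Real.exp ((1 + c * α ^ γ) * μ * (∫ u in (0 : ℝ)..x, (1 - F (α * u))) - μ * x)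

/-!
The exponent of the integrand is minus the primitive of the rate `μ - λ(α) F̄(α u)`, which increases
with `u`. If `F y ~ a y ^ p` at `0` and `h = p / (p + 1)`, then the substitution `x = s / α ^ h`
turns these rates into increasing functions that converge pointwise to
`μ a s ^ p - c μ 𝟙{γ = h}`. A primitive of an increasing function lies above its tangents, so one
tangent of large slope bounds the integrands, for all small `α`, by a single decaying exponential,
and dominated convergence applies.
-/

section MonotoneRates

variable {g : ℝ → ℝ}

lemma mul_sub_le_integral_of_monotoneOn {a b : ℝ} (hg : MonotoneOn g (uIcc a b)) :
    g a * (b - a) ≤ ∫ x in a..b, g x := by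
  have hconst (c d : ℝ) : ∫ _ in c..d, g a = g a * (d - c) := by
    rw [intervalIntegral.integral_const, smul_eq_mul, mul_comm]
  rcases le_total a b with hab | hba
  · rw [← hconst]
    exact intervalIntegral.integral_mono_on hab intervalIntegrable_const hg.intervalIntegrable
      fun x hx => hg left_mem_uIcc (Icc_subset_uIcc hx) hx.1
  · have hle : ∫ x in b..a, g x ≤ ∫ _ in b..a, g a :=
      intervalIntegral.integral_mono_on hba hg.intervalIntegrable.symm intervalIntegrable_const
        fun x hx => hg (Icc_subset_uIcc' hx) left_mem_uIcc hx.2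
    rw [hconst] at hle
    rw [intervalIntegral.integral_symm]
    linarith

lemma tangent_le_integral_of_monotoneOn (hg : MonotoneOn g (Ici 0)) {r s : ℝ} (hr : 0 ≤ r)
    (hs : 0 ≤ s) : g r * (s - r) + g 0 * r ≤ ∫ x in (0 : ℝ)..s, g x := by
  have hmono {y z : ℝ} (hy : 0 ≤ y) (hz : 0 ≤ z) : MonotoneOn g (uIcc y z) :=
    hg.mono fun _ hx => (le_min hy hz).trans hx.1
  have h_rs := mul_sub_le_integral_of_monotoneOn (hmono hr hs)
  have h_0r := mul_sub_le_integral_of_monotoneOn (hmono le_rfl hr)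
  rw [← intervalIntegral.integral_add_adjacent_intervals (hmono le_rfl hr).intervalIntegrable
    (hmono hr hs).intervalIntegrable]
  linarith

lemma continuousOn_primitive_of_monotoneOn {a : ℝ} (hg : MonotoneOn g (Ici a)) :
    ContinuousOn (fun s => ∫ x in a..s, g x) (Ici a) := by
  have hmono : Monotone fun x => g (max a x) := fun x y hxy =>
    hg (le_max_left a x) (le_max_left a y) (max_le_max_left a hxy)
  refine (intervalIntegral.continuous_primitive (μ := volume)
    (fun _ _ => hmono.intervalIntegrable) a).continuousOn.congr fun s (hs : a ≤ s) => ?_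
  refine intervalIntegral.integral_congr fun x hx => ?_
  rw [uIcc_of_le hs] at hx
  simp only [max_eq_right hx.1]

variable {ι : Type*} {l : Filter ι} {G : ι → ℝ → ℝ}

lemma tendsto_integral_of_monotoneOn [l.IsCountablyGenerated] {a b : ℝ}
    (hG : ∀ᶠ i in l, MonotoneOn (G i) (uIcc a b))
    (hlim : ∀ x ∈ uIcc a b, Tendsto (G · x) l (𝓝 (g x))) :
    Tendsto (fun i => ∫ x in a..b, G i x) l (𝓝 (∫ x in a..b, g x)) := by
  have hmin : min a b ∈ uIcc a b := left_mem_Icc.mpr min_le_max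
  have hmax : max a b ∈ uIcc a b := right_mem_Icc.mpr min_le_max
  refine intervalIntegral.tendsto_integral_filter_of_dominated_convergence
    (fun _ => max |g (min a b) - 1| |g (max a b) + 1|) ?_ ?_ intervalIntegrable_const
    (.of_forall fun x hx => hlim x (uIoc_subset_uIcc hx))
  · filter_upwards [hG] with i hi
    exact hi.intervalIntegrable.aestronglyMeasurable_restrict_uIoc
  · filter_upwards [hG, (hlim _ hmin).eventually_const_lt (sub_one_lt _),
      (hlim _ hmax).eventually_lt_const (lt_add_one _)] with i hi hlow hupp
    refine .of_forall fun x hx => ?_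
    have hx' := uIoc_subset_uIcc hx
    exact abs_le_max_abs_abs (hlow.le.trans (hi hmin hx' hx'.1))
      ((hi hx' hmax hx'.2).trans hupp.le)

lemma exists_eventually_exp_neg_integral_le (hG : ∀ᶠ i in l, MonotoneOn (G i) (Ici 0))
    (hlim : ∀ x ∈ Ici (0 : ℝ), Tendsto (G · x) l (𝓝 (g x))) (hg : Tendsto g atTop atTop) (b : ℝ) :
    ∃ C, ∀ᶠ i in l, ∀ s, 0 ≤ s →
      Real.exp (-∫ x in (0 : ℝ)..s, G i x) ≤ C * Real.exp (-(b * s)) := by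
  obtain ⟨r, hbr, hr⟩ : ∃ r, b < g r ∧ 0 ≤ r :=
    ((hg.eventually_gt_atTop b).and (eventually_ge_atTop 0)).exists
  refine ⟨Real.exp ((g r - g 0 + 1) * r), ?_⟩
  have hdiff := ((hlim r hr).sub (hlim 0 self_mem_Ici)).eventually_lt_const (lt_add_one _)
  filter_upwards [hG, (hlim r hr).eventually_const_lt hbr, hdiff] with i hi hslope hdiff s hs
  rw [← Real.exp_add, Real.exp_le_exp]
  have htangent := tangent_le_integral_of_monotoneOn hi hr hs
  have hslope_mul : b * s ≤ G i r * s := by gcongr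
  have hdiff_mul : (G i r - G i 0) * r ≤ (g r - g 0 + 1) * r := by gcongr
  linarith

theorem tendsto_integral_mul_exp_neg_integral [l.IsCountablyGenerated]
    (hG : ∀ᶠ i in l, MonotoneOn (G i) (Ici 0))
    (hlim : ∀ x ∈ Ici (0 : ℝ), Tendsto (G · x) l (𝓝 (g x))) (hg : Tendsto g atTop atTop)
    {w : ℝ → ℝ} {b : ℝ} (hw : IntegrableOn (fun s => w s * Real.exp (-(b * s))) (Ioi 0)) :
    Tendsto (fun i => ∫ s in Ioi (0 : ℝ), w s * Real.exp (-∫ x in (0 : ℝ)..s, G i x)) l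
      (𝓝 (∫ s in Ioi (0 : ℝ), w s * Real.exp (-∫ x in (0 : ℝ)..s, g x))) := by
  obtain ⟨C, hC⟩ := exists_eventually_exp_neg_integral_le hG hlim hg b
  have hw_meas : AEStronglyMeasurable w (volume.restrict (Ioi 0)) := by
    refine (hw.aestronglyMeasurable.mul
      (by fun_prop : Continuous fun s => Real.exp (b * s)).aestronglyMeasurable).congr
        (.of_forall fun s => ?_)
    simp [mul_assoc, ← Real.exp_add]
  refine tendsto_integral_filter_of_dominated_convergence
    (fun s => C * ‖w s * Real.exp (-(b * s))‖) ?_ ?_ (hw.norm.const_mul C) ?_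
  · filter_upwards [hG] with i hi
    exact hw_meas.mul ((Real.continuous_exp.comp_continuousOn
      ((continuousOn_primitive_of_monotoneOn hi).mono Ioi_subset_Ici_self).neg).aestronglyMeasurable
        measurableSet_Ioi)
  · filter_upwards [hC] with i hi
    filter_upwards [ae_restrict_mem measurableSet_Ioi] with s (hs : 0 < s)
    rw [norm_mul, norm_mul, Real.norm_of_nonneg (Real.exp_nonneg _),
      Real.norm_of_nonneg (Real.exp_nonneg _), mul_left_comm]
    gcongr
    exact hi s hs.le
  · filter_upwards [ae_restrict_mem measurableSet_Ioi] with s (hs : 0 < s)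
    have hsub : uIcc 0 s ⊆ Ici 0 := by
      rw [uIcc_of_le hs.le]
      exact Icc_subset_Ici_self
    exact (tendsto_integral_of_monotoneOn (hG.mono fun _ hi => hi.mono hsub)
      fun x hx => hlim x (hsub hx)).neg.rexp.const_mul (w s)

end MonotoneRates

lemma mul_integral_comp_mul_left_mul_exp_neg_integral (w g : ℝ → ℝ) {b : ℝ} (hb : 0 < b) :
    b * ∫ x in Ioi (0 : ℝ), w (b * x) * Real.exp (-∫ u in (0 : ℝ)..x, g u) =
      ∫ s in Ioi (0 : ℝ), w s * Real.exp (-∫ v in (0 : ℝ)..s, b⁻¹ * g (b⁻¹ * v)) := by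
  have hsubst := integral_comp_mul_left_Ioi'
    (fun s => w s * Real.exp (-∫ v in (0 : ℝ)..s, b⁻¹ * g (b⁻¹ * v))) 0 hb
  rw [mul_zero] at hsubst
  rw [← hsubst, smul_eq_mul]
  congr! 6 with x
  rw [intervalIntegral.integral_const_mul, intervalIntegral.mul_integral_comp_mul_left, mul_zero,
    inv_mul_cancel_left₀ hb.ne']

lemma integral_mul_rpow_sub_const {p : ℝ} (hp : -1 < p) (a d s : ℝ) :
    ∫ v in (0 : ℝ)..s, (a * v ^ p - d) = a * s ^ (p + 1) / (p + 1) - d * s := by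
  rw [intervalIntegral.integral_sub
    ((intervalIntegral.intervalIntegrable_rpow' hp).const_mul a)
    intervalIntegrable_const, intervalIntegral.integral_const_mul,
    integral_rpow (.inl hp), intervalIntegral.integral_const, Real.zero_rpow (by linarith)]
  simp only [sub_zero, smul_eq_mul]
  ring

lemma tendsto_rpow_nhdsGT_zero {q : ℝ} (hq : 0 < q) :
    Tendsto (fun x : ℝ => x ^ q) (𝓝[>] 0) (𝓝[>] 0) := by
  refine tendsto_nhdsWithin_iff.mpr ⟨?_, ?_⟩
  · simpa [Real.zero_rpow hq.ne'] using
      (Real.continuousAt_rpow_const 0 q (.inr hq.le)).tendsto.mono_left nhdsWithin_le_nhds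
  · filter_upwards [self_mem_nhdsWithin] with x hx using Real.rpow_pos_of_pos hx q

lemma tendsto_one_add_mul_rpow_nhdsGT_zero (c : ℝ) {q : ℝ} (hq : 0 < q) :
    Tendsto (fun x : ℝ => 1 + c * x ^ q) (𝓝[>] 0) (𝓝 1) := by
  simpa using
    (((tendsto_rpow_nhdsGT_zero hq).mono_right nhdsWithin_le_nhds).const_mul c).const_add 1

lemma tendsto_rpow_sub_nhdsGT_zero {q γ : ℝ} (hγ : q ≤ γ) :
    Tendsto (fun x : ℝ => x ^ (γ - q)) (𝓝[>] 0) (𝓝 (if γ = q then 1 else 0)) := by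
  split_ifs with h
  · simp [h]
  · exact (tendsto_rpow_nhdsGT_zero (sub_pos.mpr (hγ.lt_of_ne' h))).mono_right nhdsWithin_le_nhds

lemma tendsto_comp_rpow_mul_div_rpow {F : ℝ → ℝ} {p a : ℝ} (hp : 0 < p) (hF_zero : F 0 = 0)
    (hF : Tendsto (fun y => F y / y ^ p) (𝓝[>] 0) (𝓝 a)) {v : ℝ} (hv : 0 ≤ v) :
    Tendsto (fun α : ℝ => F (α ^ (p + 1)⁻¹ * v) / α ^ (p / (p + 1))) (𝓝[>] 0)
      (𝓝 (a * v ^ p)) := by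
  rcases hv.eq_or_lt with rfl | hv
  · simp [hF_zero, Real.zero_rpow hp.ne']
  have hy : Tendsto (fun α : ℝ => α ^ (p + 1)⁻¹ * v) (𝓝[>] 0) (𝓝[>] 0) := by
    have hα := tendsto_nhdsWithin_iff.mp (tendsto_rpow_nhdsGT_zero (by positivity : 0 < (p + 1)⁻¹))
    refine tendsto_nhdsWithin_iff.mpr ⟨by simpa using hα.1.mul_const v, ?_⟩
    filter_upwards [hα.2] with α hα using mul_pos hα hv
  refine ((hF.comp hy).mul_const (v ^ p)).congr' ?_
  filter_upwards [self_mem_nhdsWithin] with α (hα : 0 < α)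
  have hpow : (α ^ (p + 1)⁻¹ * v) ^ p = α ^ (p / (p + 1)) * v ^ p := by
    rw [Real.mul_rpow (by positivity) hv.le, ← Real.rpow_mul hα.le, inv_mul_eq_div]
  have hvp : v ^ p ≠ 0 := (Real.rpow_pos_of_pos hv p).ne'
  rw [Function.comp_apply, hpow, div_mul_eq_mul_div, mul_div_mul_right _ _ hvp]

/-- The rate `μ - λ(α) F̄(α u)`: minus its primitive is the exponent in `Jq` and `J1q`. -/
noncomputable def netRate (F : ℝ → ℝ) (μ c γ α u : ℝ) : ℝ :=
  μ - (1 + c * α ^ γ) * μ * (1 - F (α * u))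

section NetRate

variable {F : ℝ → ℝ} {p a μ γ α : ℝ} (c : ℝ)

lemma neg_integral_netRate (hF : MonotoneOn F (Ici 0)) (hα : 0 ≤ α) {x : ℝ} (hx : 0 ≤ x) :
    -∫ u in (0 : ℝ)..x, netRate F μ c γ α u =
      (1 + c * α ^ γ) * μ * (∫ u in (0 : ℝ)..x, (1 - F (α * u))) - μ * x := by
  have hmono : MonotoneOn (fun u => F (α * u)) (uIcc 0 x) := fun u hu v hv huv => by
    rw [uIcc_of_le hx] at hu hv
    exact hF (mul_nonneg hα hu.1) (mul_nonneg hα hv.1) (mul_le_mul_of_nonneg_left huv hα)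
  simp only [netRate]
  rw [intervalIntegral.integral_sub intervalIntegrable_const
      ((intervalIntegrable_const.sub hmono.intervalIntegrable).const_mul _),
    intervalIntegral.integral_const, intervalIntegral.integral_const_mul, sub_zero, smul_eq_mul]
  ring

lemma eventually_monotoneOn_netRate (hF : MonotoneOn F (Ici 0)) (hμ : 0 ≤ μ) (hγ : 0 < γ) :
    ∀ᶠ α in 𝓝[>] (0 : ℝ), MonotoneOn (netRate F μ c γ α) (Ici 0) := by
  filter_upwards [(tendsto_one_add_mul_rpow_nhdsGT_zero c hγ).eventually_const_lt one_pos,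
      self_mem_nhdsWithin] with α hρα (hα : 0 < α) u (hu : 0 ≤ u) v (hv : 0 ≤ v) huv
  have hFle : F (α * u) ≤ F (α * v) :=
    hF (mul_nonneg hα.le hu) (mul_nonneg hα.le hv) (mul_le_mul_of_nonneg_left huv hα.le)
  unfold netRate
  gcongr

lemma rescaled_netRate_eq (hp : p + 1 ≠ 0) (hα : 0 < α) (v : ℝ) :
    (α ^ (p / (p + 1)))⁻¹ * netRate F μ c γ α ((α ^ (p / (p + 1)))⁻¹ * v) =
      (1 + c * α ^ γ) * μ * (F (α ^ (p + 1)⁻¹ * v) / α ^ (p / (p + 1))) -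
        c * μ * α ^ (γ - p / (p + 1)) := by
  have harg : α * ((α ^ (p / (p + 1)))⁻¹ * v) = α ^ (p + 1)⁻¹ * v := by
    have hexp : (p + 1)⁻¹ = 1 - p / (p + 1) := by field_simp; ring
    rw [hexp, Real.rpow_sub hα, Real.rpow_one]
    ring
  rw [netRate, harg, Real.rpow_sub hα]
  field_simp
  ring

lemma tendsto_rescaled_netRate (hp : 0 < p) (hF_zero : F 0 = 0)
    (hF : Tendsto (fun y => F y / y ^ p) (𝓝[>] 0) (𝓝 a)) (hγ : p / (p + 1) ≤ γ) {v : ℝ}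
    (hv : 0 ≤ v) :
    Tendsto (fun α : ℝ => (α ^ (p / (p + 1)))⁻¹ * netRate F μ c γ α ((α ^ (p / (p + 1)))⁻¹ * v))
      (𝓝[>] 0) (𝓝 (μ * a * v ^ p - c * μ * (if γ = p / (p + 1) then 1 else 0))) := by
  have hγ_pos : 0 < γ := lt_of_lt_of_le (by positivity) hγ
  have hlam : Tendsto (fun α : ℝ => (1 + c * α ^ γ) * μ) (𝓝[>] 0) (𝓝 μ) := by
    simpa using (tendsto_one_add_mul_rpow_nhdsGT_zero c hγ_pos).mul_const μ
  have hlim := (hlam.mul (tendsto_comp_rpow_mul_div_rpow hp hF_zero hF hv)).sub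
    ((tendsto_rpow_sub_nhdsGT_zero hγ).const_mul (c * μ))
  rw [← mul_assoc] at hlim
  refine hlim.congr' ?_
  filter_upwards [self_mem_nhdsWithin] with α hα
  exact (rescaled_netRate_eq c (by positivity) hα v).symm

theorem tendsto_rpow_mul_integral_comp_mul_exp (hp : 0 < p) (ha : 0 < a)
    (hF_mono : MonotoneOn F (Ici 0)) (hF_zero : F 0 = 0)
    (hF : Tendsto (fun y => F y / y ^ p) (𝓝[>] 0) (𝓝 a)) (hμ : 0 < μ) (hγ : p / (p + 1) ≤ γ)
    {w : ℝ → ℝ} {b : ℝ} (hw : IntegrableOn (fun s => w s * Real.exp (-(b * s))) (Ioi 0)) :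
    Tendsto (fun α : ℝ => α ^ (p / (p + 1)) * ∫ x in Ioi (0 : ℝ), w (α ^ (p / (p + 1)) * x) *
        Real.exp ((1 + c * α ^ γ) * μ * (∫ u in (0 : ℝ)..x, (1 - F (α * u))) - μ * x)) (𝓝[>] 0)
      (𝓝 (∫ s in Ioi (0 : ℝ), w s * Real.exp (c * μ * s * (if γ = p / (p + 1) then 1 else 0) -
        μ * a * s ^ (p + 1) / (p + 1)))) := by
  have hmono : ∀ᶠ α : ℝ in 𝓝[>] 0, MonotoneOn (fun v => (α ^ (p / (p + 1)))⁻¹ *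
      netRate F μ c γ α ((α ^ (p / (p + 1)))⁻¹ * v)) (Ici 0) := by
    filter_upwards [eventually_monotoneOn_netRate c hF_mono hμ.le
      (lt_of_lt_of_le (by positivity) hγ), self_mem_nhdsWithin]
      with α hα (hα_pos : 0 < α) u (hu : 0 ≤ u) v (hv : 0 ≤ v) huv
    have hscale : 0 ≤ (α ^ (p / (p + 1)))⁻¹ := by positivity
    exact mul_le_mul_of_nonneg_left (hα (mul_nonneg hscale hu) (mul_nonneg hscale hv)
      (mul_le_mul_of_nonneg_left huv hscale)) hscale
  have hdiv : Tendsto (fun v : ℝ => μ * a * v ^ p - c * μ * (if γ = p / (p + 1) then 1 else 0))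
      atTop atTop :=
    tendsto_atTop_add_const_right _ _ ((tendsto_rpow_atTop hp).const_mul_atTop (mul_pos hμ ha))
  have hmain := tendsto_integral_mul_exp_neg_integral hmono
    (fun v hv => tendsto_rescaled_netRate c hp hF_zero hF hγ hv) hdiv hw
  simp only [integral_mul_rpow_sub_const (neg_one_lt_zero.trans hp), neg_sub,
    mul_right_comm (c * μ)] at hmain
  refine hmain.congr' ?_
  filter_upwards [self_mem_nhdsWithin] with α (hα : 0 < α)
  rw [← mul_integral_comp_mul_left_mul_exp_neg_integral _ _ (Real.rpow_pos_of_pos hα _)]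
  congr 1
  refine setIntegral_congr_fun measurableSet_Ioi fun x (hx : 0 < x) => ?_
  simp only [neg_integral_netRate c hF_mono hα.le hx.le]

theorem mm1gi_J_limits_critical_general (hp : 0 < p) (ha : 0 < a)
    (hF_mono : MonotoneOn F (Ici 0)) (hF_zero : F 0 = 0)
    (hF : Tendsto (fun y => F y / y ^ p) (𝓝[>] 0) (𝓝 a)) (hμ : 0 < μ) (hγ : p / (p + 1) ≤ γ) :
    Tendsto (fun α : ℝ => α ^ (p / (p + 1)) * Jq F μ c γ α) (𝓝[>] 0)
      (𝓝 (∫ s in Ioi (0 : ℝ), Real.exp (c * μ * s * (if γ = p / (p + 1) then 1 else 0) -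
        μ * a * s ^ (p + 1) / (p + 1)))) ∧
    Tendsto (fun α : ℝ => α ^ (2 * (p / (p + 1))) * J1q F μ c γ α) (𝓝[>] 0)
      (𝓝 (∫ s in Ioi (0 : ℝ), s * Real.exp (c * μ * s * (if γ = p / (p + 1) then 1 else 0) -
        μ * a * s ^ (p + 1) / (p + 1)))) := by
  have hw_one : IntegrableOn (fun s => (1 : ℝ) * Real.exp (-(1 * s))) (Ioi 0) := by
    simpa using integrableOn_exp_neg_Ioi 0
  have hw_id : IntegrableOn (fun s => s * Real.exp (-(1 * s))) (Ioi 0) := by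
    simpa using integrableOn_rpow_mul_exp_neg_mul_rpow (s := 1) (p := 1) (b := 1)
      (by norm_num) one_pos one_pos
  constructor
  · simpa only [Jq, one_mul] using
      tendsto_rpow_mul_integral_comp_mul_exp c hp ha hF_mono hF_zero hF hμ hγ hw_one
  · refine (tendsto_rpow_mul_integral_comp_mul_exp c hp ha hF_mono hF_zero hF hμ hγ hw_id).congr' ?_
    filter_upwards [self_mem_nhdsWithin] with α (hα : 0 < α)
    simp only [mul_assoc (α ^ (p / (p + 1)))]
    rw [integral_const_mul, ← mul_assoc, ← Real.rpow_add hα, ← two_mul, J1q]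

end NetRate

lemma tendsto_div_pow_of_iteratedDerivWithin_eq_zero {F : ℝ → ℝ} {k : ℕ}
    (hF : ContDiffOn ℝ k F (Ici 0)) (hF_derivs : ∀ j < k, iteratedDerivWithin j F (Ici 0) 0 = 0) :
    Tendsto (fun y => F y / y ^ k) (𝓝[>] 0)
      (𝓝 (iteratedDerivWithin k F (Ici 0) 0 / k.factorial)) := by
  have htaylor (y : ℝ) : taylorWithinEval F k (Ici 0) 0 y =
      iteratedDerivWithin k F (Ici 0) 0 / k.factorial * y ^ k := by
    rw [taylor_within_apply, Finset.sum_range_succ, Finset.sum_eq_zero fun j hj => by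
      rw [hF_derivs j (Finset.mem_range.mp hj), smul_zero]]
    simp only [sub_zero, smul_eq_mul, zero_add]
    ring
  have hlim := ((Real.taylor_tendsto (convex_Ici 0) self_mem_Ici hF).mono_left
    (nhdsWithin_mono 0 Ioi_subset_Ici_self)).add_const
      (iteratedDerivWithin k F (Ici 0) 0 / k.factorial)
  rw [zero_add] at hlim
  refine hlim.congr' ?_
  filter_upwards [self_mem_nhdsWithin] with y (hy : 0 < y)
  rw [htaylor, sub_zero, sub_div, mul_div_cancel_right₀ _ (pow_pos hy k).ne', sub_add_cancel]

lemma mul_div_factorial_mul_rpow_div (μ d s : ℝ) (k : ℕ) :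
    μ * (d / k.factorial) * s ^ ((k : ℝ) + 1) / (k + 1) =
      μ * d * s ^ (k + 1) / (k + 1).factorial := by
  rw [← Nat.cast_add_one, Real.rpow_natCast, Nat.factorial_succ, Nat.cast_mul]
  field_simp

/-- in the critically loaded regime (`γ ≥ h = k/(k+1)`),
`α^h J(α) → ∫_0^∞ exp{c μ s 𝟙{γ=h} - μ F^{(k)}(0) s^{k+1}/(k+1)!} ds` and
`α^{2h} J₁(α) → ∫_0^∞ s exp{c μ s 𝟙{γ=h} - μ F^{(k)}(0) s^{k+1}/(k+1)!} ds`. -/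
theorem mm1gi_J_limits_critical
    (k : ℕ) (hk : 1 ≤ k)
    (F : ℝ → ℝ)
    (hF_mono : Monotone F)
    (hF_zero : ∀ x ≤ (0 : ℝ), F x = 0)
    (hF_range : ∀ x, 0 ≤ x → 0 ≤ F x ∧ F x < 1)
    (hF_lim : Tendsto F atTop (𝓝 1))
    (hF_smooth : ContDiffOn ℝ k F (Set.Ici 0))
    (hF_derivs : ∀ j < k, iteratedDerivWithin j F (Set.Ici 0) 0 = 0)
    (hF_k : 0 < iteratedDerivWithin k F (Set.Ici 0) 0)
    (μ γ c : ℝ) (hμ : 0 < μ) (hγ : 0 < γ)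
    (hγh : (k : ℝ) / (k + 1) ≤ γ)
    (hJ : ∀ᶠ α in 𝓝[>] (0 : ℝ), IntegrableOn
      (fun x : ℝ => Real.exp ((1 + c * α ^ γ) * μ *
        (∫ u in (0 : ℝ)..x, (1 - F (α * u))) - μ * x)) (Set.Ioi 0))
    (hJ1 : ∀ᶠ α in 𝓝[>] (0 : ℝ), IntegrableOn
      (fun x : ℝ => x * Real.exp ((1 + c * α ^ γ) * μ *
        (∫ u in (0 : ℝ)..x, (1 - F (α * u))) - μ * x)) (Set.Ioi 0)) :
    Tendsto (fun α : ℝ => α ^ ((k : ℝ) / (k + 1)) * Jq F μ c γ α)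
      (𝓝[>] (0 : ℝ))
      (𝓝 (∫ s in Set.Ioi (0 : ℝ), Real.exp
        (c * μ * s * (if γ = (k : ℝ) / (k + 1) then (1 : ℝ) else 0)
          - μ * iteratedDerivWithin k F (Set.Ici 0) 0 * s ^ (k + 1)
            / (Nat.factorial (k + 1))))) ∧
    Tendsto (fun α : ℝ => α ^ (2 * ((k : ℝ) / (k + 1))) * J1q F μ c γ α)
      (𝓝[>] (0 : ℝ))
      (𝓝 (∫ s in Set.Ioi (0 : ℝ), s * Real.exp
        (c * μ * s * (if γ = (k : ℝ) / (k + 1) then (1 : ℝ) else 0)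
          - μ * iteratedDerivWithin k F (Set.Ici 0) 0 * s ^ (k + 1)
            / (Nat.factorial (k + 1))))) := by
  have hF : Tendsto (fun y => F y / y ^ (k : ℝ)) (𝓝[>] 0)
      (𝓝 (iteratedDerivWithin k F (Ici 0) 0 / k.factorial)) := by
    simpa only [Real.rpow_natCast] using
      tendsto_div_pow_of_iteratedDerivWithin_eq_zero hF_smooth hF_derivs
  simpa only [mul_div_factorial_mul_rpow_div] using
    mm1gi_J_limits_critical_general c (Nat.cast_pos.mpr hk) (by positivity)
      (hF_mono.monotoneOn _) (hF_zero 0 le_rfl) hF hμ hγh
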